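/- (Convexification in the limit.) Let E be a real Banach space, let 𝒵 ⊆ ℭ(E) be nonempty and compact in the Pompeiu–Hausdorff metric h, let {X_n} be a sequence with X_n ∈ 𝒵 for all n, and let C ∈ ℭ_c(E). If the closures of (co̅X₁ + … + co̅X_n)/n Fisher-converge to C as n → ∞, where co̅X denotes the closed convex hull of X, then the closures of (X₁ + … + X_n)/n Fisher-converge to C as n → ∞. -/

import Mathlib

open Metric Filter Topology Pointwise

variable {E : Type*} [NormedAddCommGroup E] [NormedSpace ℝ E] [CompleteSpace E]

/-- The excess `e(A,B) = sup_{a ∈ A} d(a, B)`. -/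
noncomputable def excess (A B : Set E) : ℝ := sSup ((fun a => infDist a B) '' A)

/-- The Pompeiu–Hausdorff distance `h(A,B) = max (e(A,B)) (e(B,A))`. -/
noncomputable def hdist (A B : Set E) : ℝ := max (excess A B) (excess B A)

/-- Fisher convergence: `e(Xₙ, L) → 0` and `d(z, Xₙ) → 0` for every `z ∈ L`. -/
def FisherConv (X : ℕ → Set E) (L : Set E) : Prop :=
  Tendsto (fun n => excess (X n) L) atTop (𝓝 0) ∧
    ∀ z ∈ L, Tendsto (fun n => infDist z (X n)) atTop (𝓝 0)

/-- A family of sets is compact in the Pompeiu–Hausdorff metric iff it is sequentially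
compact: every sequence in the family has a subsequence converging in `h` to a member. -/
def HCompact (𝒵 : Set (Set E)) : Prop :=
  ∀ Z : ℕ → Set E, (∀ n, Z n ∈ 𝒵) →
    ∃ W ∈ 𝒵, ∃ φ : ℕ → ℕ, StrictMono φ ∧
      Tendsto (fun k => hdist (Z (φ k)) W) atTop (𝓝 0)

/-!
Up to an error `ε`, total boundedness lets us replace the sets `X i` by finitely many sets `A j`,
the index `i` having a colour `J i = j`. For convex sets, a mean of the coloured family depends
only on the frequencies of the colours: it is `∑ j, p j • co (A j)`. Since the frequency vectors
lie in a cube, finitely many selections `u j ∈ co (A j)` suffice to approximate `z` by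
`∑ j, p j • u j`, whatever the frequencies. For a fixed selection, `m` copies of `u j` differ from
a sum of `m` points of `A j` by an error bounded independently of `m`, which the division by
`n + 1` removes in the limit.
-/

section Excess

variable {V : Type*} [NormedAddCommGroup V]

lemma excess_nonneg (A B : Set V) : 0 ≤ excess A B := by
  refine Real.sSup_nonneg ?_
  rintro _ ⟨a, -, rfl⟩
  exact infDist_nonneg

lemma infDist_le_excess {A B : Set V} (hA : Bornology.IsBounded A) (hB : B.Nonempty)
    {a : V} (ha : a ∈ A) : infDist a B ≤ excess A B := by
  obtain ⟨b, hb⟩ := hB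
  obtain ⟨R, hR⟩ := hA.subset_closedBall b
  refine le_csSup ⟨R, ?_⟩ (Set.mem_image_of_mem _ ha)
  rintro _ ⟨x, hx, rfl⟩
  exact (infDist_le_dist_of_mem hb).trans (hR hx)

lemma excess_mono_left {A A' B : Set V} (hA' : Bornology.IsBounded A') (hB : B.Nonempty)
    (h : A ⊆ A') : excess A B ≤ excess A' B := by
  refine Real.sSup_le ?_ (excess_nonneg A' B)
  rintro _ ⟨a, ha, rfl⟩
  exact infDist_le_excess hA' hB (h ha)

lemma hdist_eq_hausdorffDist {A B : Set V} (hA : A.Nonempty) (hB : B.Nonempty)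
    (hA' : Bornology.IsBounded A) (hB' : Bornology.IsBounded B) :
    hdist A B = hausdorffDist A B := by
  have hAB := hausdorffEDist_ne_top_of_nonempty_of_bounded hA hB hA' hB'
  apply le_antisymm
  · refine max_le (Real.sSup_le ?_ hausdorffDist_nonneg) (Real.sSup_le ?_ hausdorffDist_nonneg)
    · rintro _ ⟨a, ha, rfl⟩
      exact infDist_le_hausdorffDist_of_mem ha hAB
    · rintro _ ⟨b, hb, rfl⟩
      rw [hausdorffDist_comm]
      exact infDist_le_hausdorffDist_of_mem hb (hausdorffEDist_comm.trans_ne hAB)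
  · exact hausdorffDist_le_of_infDist (le_max_of_le_left (excess_nonneg A B))
      (fun a ha => (infDist_le_excess hA' hB ha).trans (le_max_left _ _))
      (fun b hb => (infDist_le_excess hB' hA hb).trans (le_max_right _ _))

lemma hdist_comm (A B : Set V) : hdist A B = hdist B A := max_comm _ _

lemma subset_thickening_of_hdist_lt {A B : Set V} (hA : Bornology.IsBounded A)
    (hB : B.Nonempty) {ε : ℝ} (h : hdist A B < ε) : A ⊆ thickening ε B := fun _ ha =>
  (mem_thickening_iff_infDist_lt hB).2 <|
    (infDist_le_excess hA hB ha).trans_lt ((le_max_left _ _).trans_lt h)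

/-- Total boundedness of a family of sets for the Pompeiu–Hausdorff distance, with the
`ε`-nets taken inside the family. -/
def HTotallyBounded (𝒵 : Set (Set V)) : Prop :=
  ∀ ε > 0, ∃ F ⊆ 𝒵, F.Finite ∧ ∀ A ∈ 𝒵, ∃ B ∈ F, hdist A B < ε

lemma HCompact.hTotallyBounded {𝒵 : Set (Set V)}
    (h𝒵 : ∀ A ∈ 𝒵, A.Nonempty ∧ Bornology.IsBounded A) (hc : HCompact 𝒵) :
    HTotallyBounded 𝒵 := by
  intro ε hε
  by_contra! hnet
  obtain ⟨Z, hZ, hsep⟩ := exists_seq_of_forall_finset_exists (· ∈ 𝒵)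
    (fun A B => ε ≤ hdist B A) (fun F hF => hnet F hF F.finite_toSet)
  obtain ⟨W, hW, φ, hφ, hlim⟩ := hc Z hZ
  obtain ⟨N, hN⟩ := eventually_atTop.1 (hlim.eventually_lt_const (half_pos hε))
  have htri : hdist (Z (φ (N + 1))) (Z (φ N)) ≤
      hdist (Z (φ (N + 1))) W + hdist (Z (φ N)) W := by
    obtain ⟨hne, hbd⟩ := h𝒵 _ (hZ (φ (N + 1)))
    obtain ⟨hne', hbd'⟩ := h𝒵 _ (hZ (φ N))
    obtain ⟨hWne, hWbd⟩ := h𝒵 W hW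
    rw [hdist_comm (Z (φ N)) W, hdist_eq_hausdorffDist hne hne' hbd hbd',
      hdist_eq_hausdorffDist hne hWne hbd hWbd, hdist_eq_hausdorffDist hWne hne' hWbd hbd']
    exact hausdorffDist_triangle
      (hausdorffEDist_ne_top_of_nonempty_of_bounded hne hWne hbd hWbd)
  linarith [hsep _ _ (hφ N.lt_succ_self), hN N le_rfl, hN (N + 1) N.le_succ]

end Excess

section CesaroMean

/-- The mean `(x₀ + ⋯ + xₙ) / (n + 1)`, both for sequences of points and, through the pointwise
operations, for sequences of sets. -/
noncomputable def cesaroMean {M : Type*} [AddCommMonoid M] [SMul ℝ M] (x : ℕ → M) (n : ℕ) : M :=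
  ((n : ℝ) + 1)⁻¹ • ∑ i ∈ Finset.range (n + 1), x i

/-- The proportion of the indices `0, …, n` which the colouring `J` sends to `j`. -/
noncomputable def colourFrequency {ι : Type*} [DecidableEq ι] (J : ℕ → ι) (n : ℕ) (j : ι) : ℝ :=
  ((n : ℝ) + 1)⁻¹ * ({i ∈ Finset.range (n + 1) | J i = j}.card : ℝ)

variable {ι : Type*} [DecidableEq ι]

lemma colourFrequency_mem_Icc (J : ℕ → ι) (n : ℕ) :
    colourFrequency J n ∈ Set.Icc (0 : ι → ℝ) 1 := by
  refine ⟨fun j => by simp only [colourFrequency, Pi.zero_apply]; positivity, fun j => ?_⟩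
  have hcard := Finset.card_filter_le (Finset.range (n + 1)) (J · = j)
  rw [Finset.card_range] at hcard
  simp only [colourFrequency, Pi.one_apply]
  rw [inv_mul_le_iff₀ (by positivity), mul_one]
  exact_mod_cast hcard

lemma cesaroMean_comp {M : Type*} [AddCommMonoid M] [SMul ℝ M] [Fintype ι] (J : ℕ → ι)
    (x : ι → M) (n : ℕ) :
    cesaroMean (fun i => x (J i)) n =
      ((n : ℝ) + 1)⁻¹ • ∑ j, {i ∈ Finset.range (n + 1) | J i = j}.card • x j := by
  simp only [cesaroMean, ← Finset.sum_fiberwise' _ J x, Finset.sum_const]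

end CesaroMean

section CesaroMeanSet

variable {V : Type*} [AddCommGroup V] [Module ℝ V]

lemma cesaroMean_mono {A B : ℕ → Set V} (h : ∀ i, A i ⊆ B i) (n : ℕ) :
    cesaroMean A n ⊆ cesaroMean B n :=
  Set.smul_set_mono (Set.finsetSum_subset_finsetSum _ _ _ fun i _ => h i)

lemma cesaroMean_nonempty {A : ℕ → Set V} (h : ∀ i, (A i).Nonempty) (n : ℕ) :
    (cesaroMean A n).Nonempty := by
  choose a ha using h
  exact ⟨_, Set.smul_mem_smul_set (Set.finsetSum_mem_finsetSum _ _ a fun i _ => ha i)⟩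

/-- On the left `m • s` is the `m`-fold Minkowski sum `s + ⋯ + s`, on the right a dilate of `s`. -/
lemma nsmul_eq_natCast_smul_of_convex {s : Set V} (hs : Convex ℝ s) (hne : s.Nonempty) (m : ℕ) :
    m • s = (m : ℝ) • s := by
  induction m with
  | zero => rw [zero_nsmul, Nat.cast_zero, Set.zero_smul_set hne]
  | succ m ih =>
    rw [succ_nsmul, ih, Nat.cast_succ, hs.add_smul m.cast_nonneg zero_le_one, one_smul]

lemma cesaroMean_const_of_convex {s : Set V} (hs : Convex ℝ s) (hne : s.Nonempty) (n : ℕ) :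
    cesaroMean (fun _ => s) n = s := by
  rw [cesaroMean, Finset.sum_const, Finset.card_range, nsmul_eq_natCast_smul_of_convex hs hne,
    Nat.cast_succ, inv_smul_smul₀ (by positivity)]

lemma cesaroMean_comp_of_convex {ι : Type*} [Fintype ι] [DecidableEq ι] (J : ℕ → ι)
    {B : ι → Set V} (hB : ∀ j, Convex ℝ (B j)) (hne : ∀ j, (B j).Nonempty) (n : ℕ) :
    cesaroMean (fun i => B (J i)) n = ∑ j, colourFrequency J n j • B j := by
  simp only [cesaroMean_comp J B, nsmul_eq_natCast_smul_of_convex (hB _) (hne _),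
    Finset.smul_sum, smul_smul, colourFrequency]

end CesaroMeanSet

section Rounding

variable {V : Type*} [SeminormedAddCommGroup V] [NormedSpace ℝ V]

lemma isBounded_cesaroMean {A : ℕ → Set V} (h : ∀ i, Bornology.IsBounded (A i)) (n : ℕ) :
    Bornology.IsBounded (cesaroMean A n) := by
  refine Bornology.IsBounded.smul₀ ?_ _
  exact Finset.sum_induction A Bornology.IsBounded (fun _ _ => .add) Bornology.isBounded_singleton
    fun i _ => h i

lemma cesaroMean_subset_thickening {A B : ℕ → Set V} {ε : ℝ} (hε : 0 < ε)
    (h : ∀ i, A i ⊆ thickening ε (B i)) (n : ℕ) :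
    cesaroMean A n ⊆ thickening ε (cesaroMean B n) :=
  calc cesaroMean A n ⊆ cesaroMean (fun i => B i + ball 0 ε) n :=
        cesaroMean_mono (fun i => (h i).trans_eq (add_ball_zero _ _).symm) n
    _ = cesaroMean B n + cesaroMean (fun _ => ball (0 : V) ε) n := by
        simp only [cesaroMean, Finset.sum_add_distrib, smul_add]
    _ = thickening ε (cesaroMean B n) := by
        rw [cesaroMean_const_of_convex (convex_ball 0 ε) (nonempty_ball.2 hε), add_ball_zero]

lemma convexHull_subset_thickening {A B : Set V} {ε : ℝ} (h : A ⊆ thickening ε B) :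
    convexHull ℝ A ⊆ thickening ε (convexHull ℝ B) :=
  convexHull_min (h.trans (thickening_subset_of_subset ε (subset_convexHull ℝ B)))
    ((convex_convexHull ℝ B).thickening ε)

lemma exists_add_eq_abs_mul_sub_le_one {a : ℝ} (ha : 0 ≤ a) (ha' : a ≤ 1) (m : ℕ) :
    ∃ k l : ℕ, k + l = m ∧ |a * m - k| ≤ 1 := by
  have ham : 0 ≤ a * m := by positivity
  have hfloor : ⌊a * m⌋₊ ≤ m := Nat.floor_le_of_le (mul_le_of_le_one_left m.cast_nonneg ha')
  refine ⟨⌊a * m⌋₊, m - ⌊a * m⌋₊, Nat.add_sub_cancel' hfloor, abs_le.2 ⟨?_, ?_⟩⟩ <;>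
    linarith [Nat.floor_le ham, Nat.lt_floor_add_one (a * m)]

lemma exists_forall_nsmul_near_of_mem_convexHull {W : Set V} {w : V} (hw : w ∈ convexHull ℝ W) :
    ∃ K : ℝ, ∀ m : ℕ, ∃ s ∈ m • W, ‖m • w - s‖ ≤ K := by
  suffices hsub : convexHull ℝ W ⊆ {w | ∃ K : ℝ, ∀ m : ℕ, ∃ s ∈ m • W, ‖m • w - s‖ ≤ K} from
    hsub hw
  refine convexHull_min (fun x hx => ⟨0, fun m => ⟨m • x, Set.nsmul_mem_nsmul hx, by simp⟩⟩) ?_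
  rintro u ⟨K, hK⟩ v ⟨L, hL⟩ a b ha hb hab
  refine ⟨K + L + ‖u - v‖, fun m => ?_⟩
  -- Approximate `m` copies of `a • u + b • v` by `k` copies of `u` and `l` of `v`.
  obtain ⟨k, l, hm, hk⟩ := exists_add_eq_abs_mul_sub_le_one ha (by linarith : a ≤ 1) m
  obtain ⟨s, hs, hsK⟩ := hK k
  obtain ⟨t, ht, htL⟩ := hL l
  refine ⟨s + t, by rw [← hm, add_nsmul]; exact Set.add_mem_add hs ht, ?_⟩
  have hsplit : m • (a • u + b • v) - (s + t) =
      (k • u - s) + (l • v - t) + (a * m - k) • (u - v) := by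
    have hb' : b = 1 - a := by linarith
    subst hm hb'
    push_cast
    module
  calc ‖m • (a • u + b • v) - (s + t)‖
      ≤ ‖k • u - s‖ + ‖l • v - t‖ + |a * m - k| * ‖u - v‖ := by
        rw [hsplit, ← Real.norm_eq_abs, ← norm_smul]
        exact norm_add₃_le
    _ ≤ K + L + ‖u - v‖ := by
        gcongr
        exact mul_le_of_le_one_left (norm_nonneg _) hk

variable {ι : Type*}

lemma exists_forall_sum_nsmul_near_of_mem_convexHull [Fintype ι] {A : ι → Set V} {u : ι → V}
    (hu : ∀ j, u j ∈ convexHull ℝ (A j)) :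
    ∃ K : ℝ, ∀ m : ι → ℕ, ∃ s ∈ ∑ j, m j • A j, ‖∑ j, m j • u j - s‖ ≤ K := by
  choose K hK using fun j => exists_forall_nsmul_near_of_mem_convexHull (hu j)
  refine ⟨∑ j, K j, fun m => ?_⟩
  choose s hs hsK using fun j => hK j (m j)
  refine ⟨∑ j, s j, Set.finsetSum_mem_finsetSum _ _ s fun j _ => hs j, ?_⟩
  rw [← Finset.sum_sub_distrib]
  exact norm_sum_le_of_le _ fun j _ => hsK j

lemma eventually_sum_colourFrequency_smul_mem_thickening [Fintype ι] [DecidableEq ι]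
    (J : ℕ → ι) {A : ι → Set V} {u : ι → V} (hu : ∀ j, u j ∈ convexHull ℝ (A j))
    {ε : ℝ} (hε : 0 < ε) :
    ∀ᶠ n in atTop, ∑ j, colourFrequency J n j • u j ∈
      thickening ε (cesaroMean (fun i => A (J i)) n) := by
  obtain ⟨K, hK⟩ := exists_forall_sum_nsmul_near_of_mem_convexHull hu
  have hlim : Tendsto (fun n : ℕ => ((n : ℝ) + 1)⁻¹ * K) atTop (𝓝 0) := by
    simpa using (tendsto_one_div_add_atTop_nhds_zero_nat (𝕜 := ℝ)).mul_const K
  filter_upwards [hlim.eventually_lt_const hε] with n hn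
  obtain ⟨s, hs, hsK⟩ := hK fun j => {i ∈ Finset.range (n + 1) | J i = j}.card
  rw [mem_thickening_iff, cesaroMean_comp J A]
  refine ⟨_, Set.smul_mem_smul_set hs, lt_of_le_of_lt ?_ hn⟩
  have hscale : ∑ j, colourFrequency J n j • u j =
      ((n : ℝ) + 1)⁻¹ • ∑ j, {i ∈ Finset.range (n + 1) | J i = j}.card • u j := by
    simp only [colourFrequency, mul_smul, Finset.smul_sum, Nat.cast_smul_eq_nsmul]
  rw [hscale, dist_eq_norm, ← smul_sub, norm_smul, Real.norm_of_nonneg (by positivity)]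
  gcongr

lemma norm_sum_smul_le_card_mul [Fintype ι] (q : ι → ℝ) (u : ι → V) :
    ‖∑ j, q j • u j‖ ≤ Fintype.card ι * (‖q‖ * ‖u‖) := by
  calc ‖∑ j, q j • u j‖ ≤ ∑ _j : ι, ‖q‖ * ‖u‖ := norm_sum_le_of_le _ fun j _ => by
        rw [norm_smul]
        gcongr <;> exact norm_le_pi_norm _ j
    _ = Fintype.card ι * (‖q‖ * ‖u‖) := by rw [Finset.sum_const, Finset.card_univ, nsmul_eq_mul]

lemma exists_finite_selections_dist_sum_smul_lt [Fintype ι] {B : ι → Set V}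
    (hB : ∀ j, Bornology.IsBounded (B j)) {P : Set (ι → ℝ)} (hP : TotallyBounded P)
    {z : V} {r δ : ℝ} (hδ : 0 < δ) (hz : ∀ p ∈ P, z ∈ thickening r (∑ j, p j • B j)) :
    ∃ U ⊆ Set.univ.pi B, U.Finite ∧ ∀ p ∈ P, ∃ u ∈ U, dist z (∑ j, p j • u j) < r + δ := by
  have hsel : ∀ p ∈ P, ∃ u ∈ Set.univ.pi B, dist z (∑ j, p j • u j) < r := by
    intro p hp
    obtain ⟨x, hx, hzx⟩ := mem_thickening_iff.1 (hz p hp)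
    obtain ⟨y, hy, rfl⟩ := (Set.mem_fintype_sum _ _).1 hx
    choose u hu huy using hy
    exact ⟨u, fun j _ => hu j, by simpa only [huy] using hzx⟩
  choose! u hu hzu using hsel
  obtain ⟨D, hD, hBD⟩ := (Bornology.IsBounded.pi hB).exists_pos_norm_le
  obtain ⟨η, hη, hηδ⟩ : ∃ η > 0, Fintype.card ι * (η * D) < δ := by
    refine ⟨δ / (Fintype.card ι * D + 1), by positivity, ?_⟩
    rw [← mul_assoc, mul_right_comm, ← mul_div_assoc, div_lt_iff₀ (by positivity)]
    linarith
  obtain ⟨T, hTP, hT, hcover⟩ := finite_approx_of_totallyBounded hP η hη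
  refine ⟨u '' T, Set.image_subset_iff.2 fun p hp => hu p (hTP hp), hT.image u, fun p hp => ?_⟩
  obtain ⟨q, hq, hpq⟩ := Set.mem_iUnion₂.1 (hcover hp)
  refine ⟨u q, Set.mem_image_of_mem u hq, ?_⟩
  have hchange : dist (∑ j, q j • u q j) (∑ j, p j • u q j) < δ :=
    calc dist (∑ j, q j • u q j) (∑ j, p j • u q j)
        = ‖∑ j, (q - p) j • u q j‖ := by
          simp only [dist_eq_norm, Pi.sub_apply, sub_smul, Finset.sum_sub_distrib]
      _ ≤ Fintype.card ι * (‖q - p‖ * ‖u q‖) := norm_sum_smul_le_card_mul _ _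
      _ ≤ Fintype.card ι * (η * D) := by
          gcongr
          · exact (mem_ball_iff_norm'.1 hpq).le
          · exact hBD _ (hu q (hTP hq))
      _ < δ := hηδ
  exact (dist_triangle _ _ _).trans_lt (add_lt_add (hzu q (hTP hq)) hchange)

lemma eventually_mem_thickening_cesaroMean_of_convexHull [Finite ι] (J : ℕ → ι) {A : ι → Set V}
    (hne : ∀ j, (A j).Nonempty) (hbd : ∀ j, Bornology.IsBounded (A j)) {z : V} {r δ : ℝ}
    (hδ : 0 < δ)
    (hz : ∀ᶠ n in atTop, z ∈ thickening r (cesaroMean (fun i => convexHull ℝ (A (J i))) n)) :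
    ∀ᶠ n in atTop, z ∈ thickening (r + δ) (cesaroMean (fun i => A (J i)) n) := by
  classical
  have := Fintype.ofFinite ι
  let P : Set (ι → ℝ) :=
    {p ∈ Set.Icc 0 1 | z ∈ thickening r (∑ j, p j • convexHull ℝ (A j))}
  have hP : TotallyBounded P := (totallyBounded_Icc 0 1).subset (Set.sep_subset _ _)
  obtain ⟨U, hUA, hU, hzU⟩ := exists_finite_selections_dist_sum_smul_lt
    (fun j => isBounded_convexHull.2 (hbd j)) hP (half_pos hδ) fun _ hp => hp.2
  have hround : ∀ᶠ n in atTop, ∀ u ∈ U, ∑ j, colourFrequency J n j • u j ∈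
      thickening (δ / 2) (cesaroMean (fun i => A (J i)) n) :=
    (eventually_all_finite hU).2 fun u hu => eventually_sum_colourFrequency_smul_mem_thickening J
      (fun j => hUA hu j (Set.mem_univ j)) (half_pos hδ)
  filter_upwards [hz, hround] with n hn hroundn
  rw [cesaroMean_comp_of_convex J (fun j => convex_convexHull ℝ (A j))
    (fun j => (hne j).convexHull)] at hn
  obtain ⟨u, hu, hzu⟩ := hzU _ ⟨colourFrequency_mem_Icc J n, hn⟩
  have hmem := thickening_thickening_subset _ _ _ (mem_thickening_iff.2 ⟨_, hroundn u hu, hzu⟩)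
  rwa [add_assoc, add_halves] at hmem

end Rounding

section Convexification

lemma tendsto_infDist_closure_iff_eventually_mem_thickening {α : Type*}
    [PseudoMetricSpace α] {S : ℕ → Set α} (hS : ∀ n, (S n).Nonempty) {z : α} :
    Tendsto (fun n => infDist z (closure (S n))) atTop (𝓝 0) ↔
      ∀ ε > 0, ∀ᶠ n in atTop, z ∈ thickening ε (S n) := by
  simp only [Metric.tendsto_nhds, Real.dist_0_eq_abs, abs_of_nonneg infDist_nonneg,
    infDist_closure, mem_thickening_iff_infDist_lt (hS _)]

variable {V : Type*} [NormedAddCommGroup V] [NormedSpace ℝ V]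

lemma cesaroMean_subset_cesaroMean_closure_convexHull (X : ℕ → Set V) (n : ℕ) :
    cesaroMean X n ⊆ cesaroMean (fun i => closure (convexHull ℝ (X i))) n :=
  cesaroMean_mono (fun _ => (subset_convexHull ℝ _).trans subset_closure) n

lemma HTotallyBounded.eventually_mem_thickening_cesaroMean {𝒵 : Set (Set V)}
    (h𝒵 : ∀ A ∈ 𝒵, A.Nonempty ∧ Bornology.IsBounded A) (htb : HTotallyBounded 𝒵)
    {X : ℕ → Set V} (hX : ∀ n, X n ∈ 𝒵) {z : V} {ε : ℝ} (hε : 0 < ε)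
    (hz : ∀ᶠ n in atTop,
      z ∈ thickening ε (cesaroMean (fun i => closure (convexHull ℝ (X i))) n)) :
    ∀ᶠ n in atTop, z ∈ thickening (5 * ε) (cesaroMean X n) := by
  obtain ⟨F, hF𝒵, hF, hnet⟩ := htb ε hε
  have := hF.to_subtype
  choose B hBF hXB using fun i => hnet (X i) (hX i)
  let J : ℕ → F := fun i => ⟨B i, hBF i⟩
  have hXJ : ∀ i, X i ⊆ thickening ε (J i) := fun i =>
    subset_thickening_of_hdist_lt (h𝒵 _ (hX i)).2 (h𝒵 _ (hF𝒵 (hBF i))).1 (hXB i)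
  have hJX : ∀ i, (J i : Set V) ⊆ thickening ε (X i) := fun i =>
    subset_thickening_of_hdist_lt (h𝒵 _ (hF𝒵 (hBF i))).2 (h𝒵 _ (hX i)).1
      ((hdist_comm _ _).trans_lt (hXB i))
  have hhull : ∀ i, closure (convexHull ℝ (X i)) ⊆
      thickening (ε + ε) (convexHull ℝ (J i : Set V)) := fun i =>
    calc closure (convexHull ℝ (X i)) ⊆ thickening ε (convexHull ℝ (X i)) :=
          closure_subset_thickening hε _
      _ ⊆ thickening ε (thickening ε (convexHull ℝ (J i : Set V))) :=
          thickening_subset_of_subset ε (convexHull_subset_thickening (hXJ i))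
      _ ⊆ thickening (ε + ε) (convexHull ℝ (J i : Set V)) := thickening_thickening_subset _ _ _
  have hzJ : ∀ᶠ n in atTop, z ∈ thickening (ε + (ε + ε) + ε) (cesaroMean (fun i => (J i).1) n) := by
    refine eventually_mem_thickening_cesaroMean_of_convexHull J
      (fun A => (h𝒵 A (hF𝒵 A.2)).1) (fun A => (h𝒵 A (hF𝒵 A.2)).2) hε ?_
    filter_upwards [hz] with n hn
    exact thickening_thickening_subset _ _ _
      (thickening_subset_of_subset ε (cesaroMean_subset_thickening (by positivity) hhull n) hn)
  filter_upwards [hzJ] with n hn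
  have hzX := thickening_thickening_subset _ _ _
    (thickening_subset_of_subset _ (cesaroMean_subset_thickening hε hJX n) hn)
  convert hzX using 2
  ring

theorem convexification_in_the_limit_general {𝒵 : Set (Set V)}
    (h𝒵 : ∀ A ∈ 𝒵, A.Nonempty ∧ Bornology.IsBounded A) (htb : HTotallyBounded 𝒵)
    {X : ℕ → Set V} (hX : ∀ n, X n ∈ 𝒵) {C : Set V} (hC : C.Nonempty)
    (hco : FisherConv
      (fun n => closure (cesaroMean (fun i => closure (convexHull ℝ (X i))) n)) C) :
    FisherConv (fun n => closure (cesaroMean X n)) C := by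
  have hXne : ∀ i, (X i).Nonempty := fun i => (h𝒵 _ (hX i)).1
  have hXbd : ∀ i, Bornology.IsBounded (X i) := fun i => (h𝒵 _ (hX i)).2
  have hsub := cesaroMean_subset_cesaroMean_closure_convexHull X
  refine ⟨squeeze_zero (fun n => excess_nonneg _ _) (fun n => ?_) hco.1, fun z hz => ?_⟩
  · exact excess_mono_left
      (isBounded_cesaroMean (fun i => (isBounded_convexHull.2 (hXbd i)).closure) n).closure hC
      (closure_mono (hsub n))
  · refine (tendsto_infDist_closure_iff_eventually_mem_thickening
      (cesaroMean_nonempty hXne)).2 fun ε hε => ?_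
    have hzco := (tendsto_infDist_closure_iff_eventually_mem_thickening
      fun n => (cesaroMean_nonempty hXne n).mono (hsub n)).1 (hco.2 z hz)
    have hε5 : 0 < ε / 5 := by positivity
    simpa only [mul_div_cancel₀ ε (OfNat.ofNat_ne_zero 5 : (5 : ℝ) ≠ 0)] using
      htb.eventually_mem_thickening_cesaroMean h𝒵 hX hε5 (hzco _ hε5)

end Convexification

/-- Theorem 4.1 (convexification in the limit): let `𝒵 ⊆ ℭ(E)` be nonempty and compact
in the Pompeiu–Hausdorff metric, `Xₙ ∈ 𝒵` for all `n`, and `C ∈ ℭ_c(E)`. If the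
closures of `(co̅X₁ + ⋯ + co̅Xₙ)/n` Fisher-converge to `C`, then the closures of
`(X₁ + ⋯ + Xₙ)/n` Fisher-converge to `C`. -/
theorem convexification_in_the_limit (𝒵 : Set (Set E)) (h𝒵ne : 𝒵.Nonempty)
    (h𝒵 : ∀ A ∈ 𝒵, A.Nonempty ∧ IsClosed A ∧ Bornology.IsBounded A)
    (h𝒵c : HCompact 𝒵)
    (X : ℕ → Set E) (hX : ∀ n, X n ∈ 𝒵)
    (C : Set E) (hCne : C.Nonempty) (hCcl : IsClosed C)
    (hCbd : Bornology.IsBounded C) (hCcv : Convex ℝ C)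
    (hco : FisherConv
      (fun n => closure ((((n : ℝ) + 1))⁻¹ •
        ∑ i ∈ Finset.range (n + 1), closure (convexHull ℝ (X i)))) C) :
    FisherConv
      (fun n => closure ((((n : ℝ) + 1))⁻¹ • ∑ i ∈ Finset.range (n + 1), X i)) C := by
  have h𝒵' : ∀ A ∈ 𝒵, A.Nonempty ∧ Bornology.IsBounded A :=
    fun A hA => ⟨(h𝒵 A hA).1, (h𝒵 A hA).2.2⟩
  exact convexification_in_the_limit_general h𝒵' (h𝒵c.hTotallyBounded h𝒵') hX hCne hco
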